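/- Let V' be a finite-dimensional vector space, V = V' ⊕ V'^* with the natural symmetric bilinear form <(u,φ),(u',φ')> = φ'(u) + φ(u'). Let A' ∈ End(V') and A = A' ⊕ (-A'^*). Then there exists an isometry T of the form on V with TAT^{-1} = -A and det T = (-1)^{dim V'}. -/

import Mathlib

/-!
Every endomorphism `A'` of a finite-dimensional space is self-adjoint for some nondegenerate
symmetric bilinear form `B`. By the structure theorem for `K[X]`-modules it suffices to treat
multiplication by `X` on `K[X] ⧸ (f)`, where `B x y` can be taken to be the coefficient of
`X ^ (deg f - 1)` in the reduced representative of `x * y`. Viewing `B` as an isomorphism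
`V' ≃ V'^*`, the map `T (u, φ) = (B⁻¹ φ, B u)` is an isometry because `B` is symmetric, it
anticommutes with `A' ⊕ (-A'^*)` because `A'` is self-adjoint, and in the basis of `V' ⊕ V'^*`
formed by a basis of `V'` and its image under `B` its matrix consists of two off-diagonal identity
blocks.
-/

open Polynomial

section PowerBasis

variable {R S : Type*} [CommRing R] [CommRing S] [Algebra R S]

theorem powerBasis_repr_aeval_gen (pb : PowerBasis R S) {g : R[X]} (hg : g.natDegree < pb.dim)
    (k : Fin pb.dim) : pb.basis.repr (aeval pb.gen g) k = g.coeff k := by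
  rw [aeval_eq_sum_range' hg, ← Fin.sum_univ_eq_sum_range (fun i ↦ g.coeff i • pb.gen ^ i)]
  simp only [← pb.basis_eq_pow, map_sum, map_smul, Module.Basis.repr_self]
  simp [Finsupp.single_apply]

theorem exists_separatingLeft_compr₂_mul (pb : PowerBasis R S) :
    ∃ l : S →ₗ[R] R, ((LinearMap.mul R S).compr₂ l).SeparatingLeft := by
  rcases subsingleton_or_nontrivial S with _ | _
  · exact ⟨0, fun x _ ↦ Subsingleton.elim x 0⟩
  have := (algebraMap R S).domain_nontrivial
  have hdim := pb.dim_pos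
  let top : Fin pb.dim := ⟨pb.dim - 1, by lia⟩
  refine ⟨pb.basis.coord top, fun x hx ↦ ?_⟩
  obtain ⟨g, hg, rfl⟩ := pb.exists_eq_aeval x
  by_contra hne
  have hg0 : g ≠ 0 := by
    rintro rfl
    exact hne (map_zero _)
  -- Multiplying by this power of the generator moves the leading coefficient to the top coordinate.
  let m := pb.dim - 1 - g.natDegree
  have hdeg : (g * X ^ m).natDegree < pb.dim := by
    rw [natDegree_mul_X_pow m hg0]
    lia
  have htop : (top : ℕ) = g.natDegree + m := by
    simp only [top, m]
    lia
  have hlead : g.leadingCoeff = 0 :=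
    calc g.leadingCoeff = (g * X ^ m).coeff top := by rw [htop, coeff_mul_X_pow, leadingCoeff]
      _ = pb.basis.repr (aeval pb.gen (g * X ^ m)) top := (powerBasis_repr_aeval_gen pb hdeg _).symm
      _ = 0 := by rw [map_mul]; exact hx (aeval pb.gen (X ^ m))
  exact hg0 (leadingCoeff_eq_zero.mp hlead)

end PowerBasis

section IsSymmetrizable

variable {R M N : Type*} [CommRing R] [AddCommGroup M] [Module R M] [AddCommGroup N] [Module R N]

/-- An endomorphism is symmetrizable if it is self-adjoint with respect to some nondegenerate
symmetric bilinear form. -/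
def IsSymmetrizable (f : Module.End R M) : Prop :=
  ∃ B : LinearMap.BilinForm R M, B.IsSymm ∧ B.Nondegenerate ∧ LinearMap.IsSelfAdjoint B f

theorem isSymmetrizable_of_separatingLeft {f : Module.End R M} (B : LinearMap.BilinForm R M)
    (hsymm : B.IsSymm) (hsep : B.SeparatingLeft) (hf : LinearMap.IsSelfAdjoint B f) :
    IsSymmetrizable f :=
  ⟨B, hsymm, hsymm.isRefl.nondegenerate_iff_separatingLeft.mpr hsep, hf⟩

theorem IsSymmetrizable.of_semiconj {f : Module.End R M} {g : Module.End R N}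
    (hg : IsSymmetrizable g) (e : M ≃ₗ[R] N) (h : Function.Semiconj e f g) :
    IsSymmetrizable f := by
  obtain ⟨B, hsymm, hB, hadj⟩ := hg
  refine ⟨LinearMap.BilinForm.congr e.symm B, ⟨fun x y ↦ hsymm.eq (e x) (e y)⟩,
    hB.congr e.symm, fun x y ↦ ?_⟩
  simpa [h.eq] using hadj (e x) (e y)

theorem IsSymmetrizable.piMap {ι : Type*} [Finite ι] {M : ι → Type*} [∀ i, AddCommGroup (M i)]
    [∀ i, Module R (M i)] {f : ∀ i, Module.End R (M i)} (hf : ∀ i, IsSymmetrizable (f i)) :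
    IsSymmetrizable (LinearMap.piMap f) := by
  classical
  cases nonempty_fintype ι
  choose B hsymm hB hadj using hf
  let P : LinearMap.BilinForm R (∀ i, M i) :=
    ∑ i, (B i).compl₁₂ (LinearMap.proj i) (LinearMap.proj i)
  have hP (x y : ∀ i, M i) : P x y = ∑ i, B i (x i) (y i) := by
    simp [P, LinearMap.sum_apply]
  refine isSymmetrizable_of_separatingLeft P ⟨fun x y ↦ ?_⟩ (fun x hx ↦ ?_) fun x y ↦ ?_
  · simp only [hP, (hsymm _).eq (x _)]
  · ext i
    refine (hB i).1 (x i) fun y ↦ ?_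
    have hsingle : P x (Pi.single i y) = B i (x i) y := by
      rw [hP, Finset.sum_eq_single_of_mem i (Finset.mem_univ i) (fun j _ hj ↦ by simp [hj]),
        Pi.single_eq_same]
    rw [← hsingle, hx]
  · simp only [hP, LinearMap.coe_piMap, Pi.map_apply, hadj _ (x _) (y _)]

theorem isSymmetrizable_mulLeft_of_powerBasis {S : Type*} [CommRing S] [Algebra R S]
    (pb : PowerBasis R S) (a : S) : IsSymmetrizable (LinearMap.mulLeft R a) := by
  obtain ⟨l, hl⟩ := exists_separatingLeft_compr₂_mul pb
  refine isSymmetrizable_of_separatingLeft _ ⟨fun x y ↦ ?_⟩ hl fun x y ↦ ?_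
  · simp [mul_comm x y]
  · simp [mul_assoc, mul_left_comm x a y]

theorem isSymmetrizable_lsmul_X_quotient_span {K : Type*} [Field K] {f : K[X]} (hf : f ≠ 0) :
    IsSymmetrizable (Algebra.lsmul K K (K[X] ⧸ Submodule.span K[X] {f}) (X : K[X])) :=
  -- `AdjoinRoot f` unfolds to this quotient, on which `X` acts as multiplication by `root f`.
  isSymmetrizable_mulLeft_of_powerBasis (AdjoinRoot.powerBasis hf) (AdjoinRoot.root f)

theorem isSymmetrizable_of_finiteDimensional {K V : Type*} [Field K] [AddCommGroup V] [Module K V]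
    [FiniteDimensional K V] (A : Module.End K V) : IsSymmetrizable A := by
  classical
  obtain ⟨ι, _, p, hp, n, ⟨e⟩⟩ := Module.equiv_directSum_of_isTorsion
    (Module.AEval.isTorsion_of_finiteDimensional K V A)
  let e' : Module.AEval K V A ≃ₗ[K[X]] ∀ i, K[X] ⧸ Submodule.span K[X] {p i ^ n i} :=
    e ≪≫ₗ DirectSum.linearEquivFunOnFintype K[X] ι _
  have hpi := IsSymmetrizable.piMap fun i ↦
    isSymmetrizable_lsmul_X_quotient_span (pow_ne_zero (n i) (hp i).ne_zero)
  refine hpi.of_semiconj (Module.AEval.of K V A ≪≫ₗ e'.restrictScalars K) fun v ↦ ?_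
  have hX : Module.AEval.of K V A (A v) = (X : K[X]) • Module.AEval.of K V A v :=
    (Module.AEval.X_smul_of A v).symm
  exact (congrArg e' hX).trans (e'.map_smul X _)

end IsSymmetrizable

section Exchange

variable {R M N : Type*} [CommRing R] [AddCommGroup M] [Module R M] [AddCommGroup N] [Module R N]

/-- The involution `(x, y) ↦ (e⁻¹ y, e x)` of `M × N` exchanging the two summands by means of an
isomorphism `e : M ≃ N`. -/
def exchange (e : M ≃ₗ[R] N) : (M × N) ≃ₗ[R] (M × N) :=
  LinearEquiv.prodComm R M N ≪≫ₗ e.symm.prodCongr e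

@[simp]
theorem exchange_apply (e : M ≃ₗ[R] N) (p : M × N) : exchange e p = (e.symm p.2, e p.1) :=
  rfl

theorem exchange_pairing_of_symm (C : M ≃ₗ[R] Module.Dual R M) (hC : ∀ x y, C x y = C y x)
    (p q : M × Module.Dual R M) :
    (exchange C q).2 (exchange C p).1 + (exchange C p).2 (exchange C q).1
      = q.2 p.1 + p.2 q.1 := by
  have h (x : M) (φ : Module.Dual R M) : C x (C.symm φ) = φ x := by
    rw [hC, C.apply_symm_apply]
  simp only [exchange_apply, h, add_comm]

theorem exchange_prodMap_neg (e : M ≃ₗ[R] N) {f : Module.End R M} {g : Module.End R N}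
    (h : Function.Semiconj e f g) (p : M × N) :
    exchange e (f.prodMap (-g) p) = -f.prodMap (-g) (exchange e p) := by
  have hsymm : e.symm (g p.2) = f (e.symm p.2) := by
    rw [e.symm_apply_eq, h.eq, e.apply_symm_apply]
  simp [hsymm, h.eq]

theorem det_fromBlocks_zero_one_one_zero {n : Type*} [Fintype n] [DecidableEq n] :
    (Matrix.fromBlocks 0 1 1 0 : Matrix (n ⊕ n) (n ⊕ n) R).det = (-1) ^ Fintype.card n := by
  have hmul : (Matrix.fromBlocks 0 1 1 0 : Matrix (n ⊕ n) (n ⊕ n) R) * Matrix.fromBlocks 1 0 1 1 =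
      Matrix.fromBlocks 1 1 1 0 := by
    simp [Matrix.fromBlocks_multiply]
  have hdet := congrArg Matrix.det hmul
  rw [Matrix.det_mul, Matrix.det_fromBlocks_zero₁₂, Matrix.det_fromBlocks_one₁₁] at hdet
  simpa [Matrix.det_neg] using hdet

theorem det_exchange [Module.Free R M] [Module.Finite R M] (e : M ≃ₗ[R] N) :
    LinearMap.det (exchange e : (M × N) →ₗ[R] (M × N)) = (-1) ^ Module.finrank R M := by
  classical
  nontriviality R
  let b := Module.Free.chooseBasis R M
  let b' := b.prod (b.map e)
  have hmatrix : LinearMap.toMatrix b' b' (exchange e) = Matrix.fromBlocks 0 1 1 0 := by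
    ext (i | i) (j | j) <;>
      simp [b', LinearMap.toMatrix_apply, Matrix.one_apply, Finsupp.single_apply, eq_comm]
  rw [← LinearMap.det_toMatrix b', hmatrix, det_fromBlocks_zero_one_one_zero,
    Module.finrank_eq_card_basis b]

end Exchange

theorem stmt17 {K V' : Type*} [Field K] [AddCommGroup V'] [Module K V'] [FiniteDimensional K V']
    (A' : Module.End K V') :
    ∃ T : (V' × Module.Dual K V') ≃ₗ[K] (V' × Module.Dual K V'),
      (∀ p q : V' × Module.Dual K V',
        (T q).2 (T p).1 + (T p).2 (T q).1 = q.2 p.1 + p.2 q.1) ∧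
      (∀ p : V' × Module.Dual K V',
        T ((A'.prodMap (-A'.dualMap)) p) = - (A'.prodMap (-A'.dualMap)) (T p)) ∧
      LinearMap.det (T : (V' × Module.Dual K V') →ₗ[K] (V' × Module.Dual K V'))
        = (-1 : K) ^ Module.finrank K V' := by
  obtain ⟨B, hsymm, hB, hadj⟩ := isSymmetrizable_of_finiteDimensional A'
  have hdual : Function.Semiconj (B.toDual hB) A' A'.dualMap := fun u ↦ LinearMap.ext (hadj u)
  exact ⟨exchange (B.toDual hB), exchange_pairing_of_symm _ hsymm.eq,
    exchange_prodMap_neg _ hdual, det_exchange _⟩
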